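/- Algebraic Rainich theorem (2-form version): let T be an η-self-adjoint endomorphism of ℝ⁴ with tr T = 0, 4·(T∘T) = tr(T∘T)·id, tr(T∘T) ≠ 0, and η(Tx,x) > 0 for every timelike vector x. Then there exists a simple 2-form F (i.e. tr(F̂∘(*F)̂) = 0) such that T = −(1/2)(F̂∘F̂ + (*F)̂∘(*F)̂). Moreover, for every θ ∈ ℝ the duality-rotated 2-form F_θ := cos θ · F + sin θ · (*F) has the same energy tensor: −(1/2)((F_θ)̂∘(F_θ)̂ + (*F_θ)̂∘(*F_θ)̂) = T. -/

import Mathlib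

open Matrix Real

/-- Spacetime `ℝ⁴` with the standard basis. -/
abbrev V4 : Type := Fin 4 → ℝ

/-- `4×4` real matrices: components of bilinear forms / endomorphisms of `ℝ⁴`
in the standard basis `(e₀,e₁,e₂,e₃)`. -/
abbrev Mat4 : Type := Matrix (Fin 4) (Fin 4) ℝ

/-- The Minkowski metric `diag(-1,1,1,1)` (it equals its own inverse). -/
noncomputable def ηm : Mat4 := Matrix.diagonal ![-1, 1, 1, 1]

/-- The Minkowski bilinear form `η(x,y) = -x₀y₀ + x₁y₁ + x₂y₂ + x₃y₃`. -/
noncomputable def ηb (x y : V4) : ℝ := x ⬝ᵥ ηm *ᵥ y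

/-- A vector `x` is timelike if `η(x,x) < 0`. -/
noncomputable def Timelike (x : V4) : Prop := ηb x x < 0

/-- Evaluation of the bilinear form with component matrix `B`:
`B(x,y) = Σ xᵅ B_{αβ} yᵝ`. -/
noncomputable def bil (B : Mat4) (x y : V4) : ℝ := x ⬝ᵥ B *ᵥ y

/-- A 2-form is a skew-symmetric bilinear form. -/
noncomputable def IsTwoForm (B : Mat4) : Prop := Bᵀ = -B

/-- The endomorphism `B̂` associated with the bilinear form `B`, i.e. the unique
endomorphism with `η(B̂x, y) = B(x,y)` for all `x, y`.  (Indeed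
`ηb (hat B *ᵥ x) y = bil B x y`.) -/
noncomputable def hat (B : Mat4) : Mat4 := ηm * Bᵀ

/-- The totally antisymmetric Levi-Civita symbol on four indices, `ε₀₁₂₃ = 1`. -/
noncomputable def lc (a b c d : Fin 4) : ℝ :=
  (((b : ℕ) : ℝ) - ((a : ℕ) : ℝ)) * (((c : ℕ) : ℝ) - ((a : ℕ) : ℝ)) *
    (((d : ℕ) : ℝ) - ((a : ℕ) : ℝ)) * (((c : ℕ) : ℝ) - ((b : ℕ) : ℝ)) *
    (((d : ℕ) : ℝ) - ((b : ℕ) : ℝ)) * (((d : ℕ) : ℝ) - ((c : ℕ) : ℝ)) / 12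

/-- The Hodge dual of a 2-form:
`(*F)(e_α,e_β) = (1/2) Σ ε_{αβγδ} η^{γμ} η^{δν} F(e_μ,e_ν)`. -/
noncomputable def hodge (F : Mat4) : Mat4 :=
  Matrix.of fun α β => (1/2) * ∑ γ, ∑ δ, ∑ μ, ∑ ν, lc α β γ δ * ηm γ μ * ηm δ ν * F μ ν

/-- A unitary 2-form: `tr(Û∘Û) = 2` and `tr(Û∘(*U)̂) = 0`. -/
noncomputable def IsUnitary (U : Mat4) : Prop :=
  IsTwoForm U ∧ (hat U * hat U).trace = 2 ∧ (hat U * hat (hodge U)).trace = 0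

/-- An endomorphism `L` is η-self-adjoint if `η(Lx,y) = η(x,Ly)` for all `x, y`. -/
noncomputable def SelfAdj (L : Mat4) : Prop := ∀ x y : V4, ηb (L *ᵥ x) y = ηb x (L *ᵥ y)

/-!
The energy condition excludes `T² = -m²`, so `T² = l²` with `l > 0` and `S = T / l` is a traceless
involution. The projection `P = (1 - S) / 2` therefore has rank two, and positivity of the energy
makes `P e₀` timelike. Splitting off this direction leaves an idempotent of trace one that
annihilates `e₀`, hence is symmetric in the Euclidean sense and equal to `v vᵀ` for some `v`. So
`P` is the `η`-orthogonal projection onto the span of orthonormal `u` (timelike) and `v`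
(spacelike).

For every 2-form, `(*F)̂² = F̂² - ½ tr(F̂²)`, so the energy tensor is `¼ tr(F̂²) - F̂²`. For
`F = √(2l) u♭ ∧ v♭` one has `F̂² = 2l P`, and the energy tensor is `l (1 - 2P) = T`. Rotations
do not change it, because `** = -1` on 2-forms.
-/

lemma isIdempotentElem_half_smul_one_sub {K A : Type*} [Field K] [NeZero (2 : K)] [Ring A]
    [Algebra K A] {s : A} (hs : s * s = 1) : IsIdempotentElem ((1 / 2 : K) • (1 - s)) := by
  have hsq : (1 - s) * (1 - s) = (2 : K) • (1 - s) := by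
    rw [sub_mul, mul_sub, mul_sub, hs, one_mul, one_mul, mul_one, two_smul]
    abel
  rw [IsIdempotentElem, smul_mul_smul_comm, hsq, smul_smul, mul_assoc,
    one_div_mul_cancel two_ne_zero, mul_one]

section RankOneDeflation

variable {ι K : Type*} [Fintype ι] [CommRing K] {P : Matrix ι ι K} {x y : ι → K}

lemma isIdempotentElem_sub_vecMulVec (hP : IsIdempotentElem P) (hx : P *ᵥ x = x)
    (hy : y ᵥ* P = y) (hyx : y ⬝ᵥ x = 1) : IsIdempotentElem (P - vecMulVec x y) := by
  have hxy : vecMulVec x y * vecMulVec x y = vecMulVec x y := by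
    rw [vecMulVec_mul_vecMulVec, hyx, one_smul]
  rw [IsIdempotentElem, sub_mul, mul_sub, mul_sub, hP.eq, mul_vecMulVec, hx, vecMulVec_mul, hy,
    hxy, sub_self, sub_zero]

lemma trace_sub_vecMulVec (hyx : y ⬝ᵥ x = 1) :
    (P - vecMulVec x y).trace = P.trace - 1 := by
  rw [trace_sub, trace_vecMulVec, dotProduct_comm, hyx]

lemma sub_vecMulVec_mulVec_self (hx : P *ᵥ x = x) (hyx : y ⬝ᵥ x = 1) :
    (P - vecMulVec x y) *ᵥ x = 0 := by
  rw [sub_mulVec, hx, vecMulVec_mulVec, hyx, MulOpposite.op_one, one_smul, sub_self]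

end RankOneDeflation

section SymmetricIdempotent

variable {ι : Type*} [Fintype ι] {P : Matrix ι ι ℝ}

lemma eq_zero_of_isSymm_of_trace_eq_zero (hs : P.IsSymm) (hP : IsIdempotentElem P)
    (ht : P.trace = 0) : P = 0 := by
  rw [← trace_conjTranspose_mul_self_eq_zero_iff, conjTranspose_eq_transpose_of_trivial, hs.eq,
    hP.eq, ht]

lemma exists_pos_diag_of_trace_pos (ht : 0 < P.trace) : ∃ k, 0 < P k k := by
  obtain ⟨k, -, hk⟩ := Finset.exists_lt_of_sum_lt (s := Finset.univ) (f := 0) (g := P.diag)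
    (by simpa [trace] using ht)
  exact ⟨k, hk⟩

-- Some diagonal entry `P k k = ‖P eₖ‖²` is positive; splitting off the normalized column `P eₖ`
-- leaves a symmetric idempotent of trace zero.
lemma exists_eq_vecMulVec_self_of_trace_eq_one (hs : P.IsSymm) (hP : IsIdempotentElem P)
    (ht : P.trace = 1) : ∃ n : ι → ℝ, P = vecMulVec n n := by
  classical
  obtain ⟨k, hk⟩ := exists_pos_diag_of_trace_pos (ht ▸ one_pos)
  set n : ι → ℝ := (√(P k k))⁻¹ • P *ᵥ Pi.single k 1 with hn
  have hPn : P *ᵥ n = n := by rw [hn, mulVec_smul, mulVec_mulVec, hP.eq]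
  have hnP : n ᵥ* P = n := by rw [← mulVec_transpose, hs.eq, hPn]
  have hnn : n ⬝ᵥ n = 1 := calc
    n ⬝ᵥ n = (√(P k k))⁻¹ * n k := by
      conv_lhs => rw [hn, dotProduct_smul, dotProduct_mulVec, hnP]
      rw [dotProduct_single_one, smul_eq_mul]
    _ = (√(P k k) ^ 2)⁻¹ * P k k := by simp [hn]; ring
    _ = 1 := by rw [Real.sq_sqrt hk.le, inv_mul_cancel₀ hk.ne']
  refine ⟨n, sub_eq_zero.mp (eq_zero_of_isSymm_of_trace_eq_zero ?_ ?_ ?_)⟩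
  · exact hs.sub (transpose_vecMulVec n n)
  · exact isIdempotentElem_sub_vecMulVec hP hPn hnP hnn
  · rw [trace_sub_vecMulVec hnn, ht, sub_self]

end SymmetricIdempotent

section Minkowski

lemma ηm_mul_ηm : ηm * ηm = 1 := by
  ext i j
  fin_cases i <;> fin_cases j <;> simp [ηm]

lemma ηm_transpose : ηmᵀ = ηm := diagonal_transpose _

lemma ηb_comm (x y : V4) : ηb x y = ηb y x := by
  rw [ηb, ηb, dotProduct_mulVec, ← mulVec_transpose, ηm_transpose, dotProduct_comm]

lemma ηb_add_left (x y z : V4) : ηb (x + y) z = ηb x z + ηb y z := add_dotProduct _ _ _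

lemma ηb_smul_left (c : ℝ) (x y : V4) : ηb (c • x) y = c * ηb x y := smul_dotProduct _ _ _

lemma ηb_add_right (x y z : V4) : ηb x (y + z) = ηb x y + ηb x z := by
  rw [ηb, mulVec_add, dotProduct_add, ← ηb, ← ηb]

lemma ηb_smul_right (c : ℝ) (x y : V4) : ηb x (c • y) = c * ηb x y := by
  rw [ηb, mulVec_smul, dotProduct_smul, smul_eq_mul, ← ηb]

lemma selfAdj_iff_transpose_mul (L : Mat4) : SelfAdj L ↔ Lᵀ * ηm = ηm * L := by
  change _ ↔ ηm.IsSelfAdjoint L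
  rw [Matrix.IsSelfAdjoint, ← isAdjointPair_toLinearMap₂']
  simp only [SelfAdj, LinearMap.IsAdjointPair, ηb, toLinearMap₂'_apply', toLin'_apply]

lemma SelfAdj.transpose_mul {L : Mat4} (hL : SelfAdj L) : Lᵀ * ηm = ηm * L :=
  (selfAdj_iff_transpose_mul L).mp hL

lemma dotProduct_ηm_mulVec (x y : V4) : (ηm *ᵥ x) ⬝ᵥ y = ηb x y := by
  rw [dotProduct_comm, ← ηb, ηb_comm]

lemma trace_vecMulVec_ηm (x y : V4) : (vecMulVec x (ηm *ᵥ y)).trace = ηb x y :=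
  trace_vecMulVec _ _

/-- The timelike basis vector `e₀`, used as the reference observer. -/
def e₀ : V4 := Pi.single 0 1

lemma ηb_e₀_e₀ : ηb e₀ e₀ = -1 := by simp [ηb, ηm, e₀]

lemma timelike_e₀ : Timelike e₀ := by
  rw [Timelike, ηb_e₀_e₀]
  exact neg_one_lt_zero

lemma mul_ηm_of_mulVec_e₀_eq_zero {L : Mat4} (hL : L *ᵥ e₀ = 0) : L * ηm = L := by
  have col (i) : L i 0 = 0 := by simpa [e₀] using congr_fun hL i
  ext i j
  rw [ηm, mul_diagonal]
  fin_cases j <;> simp [col]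

lemma SelfAdj.ηm_mulVec_vecMul {L : Mat4} (hL : SelfAdj L) (x : V4) :
    (ηm *ᵥ x) ᵥ* L = ηm *ᵥ (L *ᵥ x) := by
  rw [← mulVec_transpose, mulVec_mulVec, hL.transpose_mul, mulVec_mulVec]

lemma SelfAdj.sub {L M : Mat4} (hL : SelfAdj L) (hM : SelfAdj M) : SelfAdj (L - M) := by
  rw [selfAdj_iff_transpose_mul, transpose_sub, sub_mul, mul_sub, hL.transpose_mul,
    hM.transpose_mul]

lemma SelfAdj.smul {L : Mat4} (hL : SelfAdj L) (c : ℝ) : SelfAdj (c • L) := fun x y => by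
  rw [smul_mulVec, smul_mulVec, ηb_smul_left, ηb_smul_right, hL]

lemma selfAdj_one : SelfAdj 1 := fun x y => by rw [one_mulVec, one_mulVec]

lemma selfAdj_vecMulVec_ηm (x : V4) : SelfAdj (vecMulVec x (ηm *ᵥ x)) := by
  rw [selfAdj_iff_transpose_mul, transpose_vecMulVec, vecMulVec_mul, mul_vecMulVec,
    ← mulVec_transpose, ηm_transpose]

lemma SelfAdj.isSymm_of_mulVec_e₀_eq_zero {L : Mat4} (hL : SelfAdj L) (h : L *ᵥ e₀ = 0) :
    L.IsSymm := by
  have hηLt : ηm * Lᵀ = Lᵀ := by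
    rw [← ηm_transpose, ← Matrix.transpose_mul, mul_ηm_of_mulVec_e₀_eq_zero h]
  have hηL : ηm * L = L := calc
    ηm * L = (ηm * Lᵀ) * ηm := by rw [hηLt, hL.transpose_mul]
    _ = ηm * ηm * L := by rw [mul_assoc, hL.transpose_mul, mul_assoc]
    _ = L := by rw [ηm_mul_ηm, one_mul]
  calc
    Lᵀ = (ηm * L)ᵀ := by rw [hηL]
    _ = Lᵀ * ηm := by rw [Matrix.transpose_mul, ηm_transpose]
    _ = L := by rw [hL.transpose_mul, hηL]

-- The test vector `c e₀ + η(T e₀, e₀) T e₀` would be timelike with negative energy if `c < 0`.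
lemma SelfAdj.nonneg_of_mul_self_eq_smul_one {T : Mat4} (hT : SelfAdj T) {c : ℝ}
    (hTT : T * T = c • (1 : Mat4)) (hen : ∀ x, Timelike x → 0 < ηb (T *ᵥ x) x) : 0 ≤ c := by
  by_contra! hc
  set w := ηb (T *ᵥ e₀) e₀ with hw
  have hw_pos : 0 < w := hen e₀ timelike_e₀
  have hTTe : T *ᵥ (T *ᵥ e₀) = c • e₀ := by rw [mulVec_mulVec, hTT, smul_mulVec, one_mulVec]
  have hew : ηb e₀ (T *ᵥ e₀) = w := by rw [hw, ηb_comm]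
  have hTeTe : ηb (T *ᵥ e₀) (T *ᵥ e₀) = -c := by
    rw [hT, hTTe, ηb_smul_right, ηb_e₀_e₀, mul_neg_one]
  set x := c • e₀ + w • T *ᵥ e₀ with hx
  have hxx : ηb x x = -c ^ 2 + c * w ^ 2 := by
    simp only [hx, ηb_add_left, ηb_add_right, ηb_smul_left, ηb_smul_right, ηb_e₀_e₀, hew, ← hw,
      hTeTe]
    ring
  have hTxx : ηb (T *ᵥ x) x = -(c ^ 2 * w) + c * w ^ 3 := by
    simp only [hx, mulVec_add, mulVec_smul, hTTe, ηb_add_left, ηb_add_right, ηb_smul_left,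
      ηb_smul_right, ηb_e₀_e₀, hew, ← hw, hTeTe]
    ring
  have hx_timelike : Timelike x := by
    rw [Timelike, hxx]
    nlinarith [mul_neg_of_neg_of_pos hc (pow_pos hw_pos 2), sq_nonneg c]
  have hTx_pos := hen x hx_timelike
  rw [hTxx] at hTx_pos
  nlinarith [mul_neg_of_neg_of_pos hc (pow_pos hw_pos 3), mul_nonneg (sq_nonneg c) hw_pos.le]

lemma SelfAdj.exists_unit_timelike_mulVec {P : Mat4} (hP : SelfAdj P) (hPP : IsIdempotentElem P)
    {x : V4} (hx : ηb (P *ᵥ x) x < 0) :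
    ∃ (u : V4) (r : ℝ), P *ᵥ u = u ∧ ηb u u = -1 ∧ P *ᵥ x = r • u := by
  set k := -ηb (P *ᵥ x) x with hk
  have hk_pos : 0 < k := neg_pos.mpr hx
  have hPPx : P *ᵥ (P *ᵥ x) = P *ᵥ x := by rw [mulVec_mulVec, hPP.eq]
  have hnorm : ηb (P *ᵥ x) (P *ᵥ x) = -k := by rw [← hP, hPPx, hk, neg_neg]
  refine ⟨(√k)⁻¹ • P *ᵥ x, √k, ?_, ?_, ?_⟩
  · rw [mulVec_smul, hPPx]
  · have : (√k)⁻¹ * ((√k)⁻¹ * -k) = -((√k ^ 2)⁻¹ * k) := by ring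
    rw [ηb_smul_left, ηb_smul_right, hnorm, this, Real.sq_sqrt hk_pos.le,
      inv_mul_cancel₀ hk_pos.ne']
  · rw [smul_smul, mul_inv_cancel₀ (Real.sqrt_pos.mpr hk_pos).ne', one_smul]

lemma SelfAdj.exists_orthonormal_of_trace_eq_two {P : Mat4} (hP : SelfAdj P)
    (hPP : IsIdempotentElem P) (ht : P.trace = 2) (he : ηb (P *ᵥ e₀) e₀ < 0) :
    ∃ u v : V4, ηb u u = -1 ∧ ηb v v = 1 ∧ ηb u v = 0 ∧
      P = vecMulVec v (ηm *ᵥ v) - vecMulVec u (ηm *ᵥ u) := by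
  obtain ⟨u, r, hPu, huu, hPe⟩ := hP.exists_unit_timelike_mulVec hPP he
  have huP : (-(ηm *ᵥ u)) ᵥ* P = -(ηm *ᵥ u) := by rw [neg_vecMul, hP.ηm_mulVec_vecMul, hPu]
  have hu_one : -(ηm *ᵥ u) ⬝ᵥ u = 1 := by rw [neg_dotProduct, dotProduct_ηm_mulVec, huu, neg_neg]
  have hue : ηb u e₀ = -r := by
    rw [← hPu, hP, hPe, ηb_smul_right, huu, mul_neg_one]
  set Q := P - vecMulVec u (-(ηm *ᵥ u)) with hQ
  have hQ_eq : Q = P + vecMulVec u (ηm *ᵥ u) := by rw [hQ, vecMulVec_neg, sub_neg_eq_add]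
  have hQe : Q *ᵥ e₀ = 0 := by
    rw [hQ_eq, add_mulVec, hPe, vecMulVec_mulVec, dotProduct_ηm_mulVec, hue, op_smul_eq_smul,
      neg_smul, add_neg_cancel]
  have hQ_selfAdj : SelfAdj Q := by
    rw [hQ, vecMulVec_neg, ← neg_one_smul ℝ]
    exact hP.sub ((selfAdj_vecMulVec_ηm u).smul _)
  have hQ_trace : Q.trace = 1 := by rw [hQ, trace_sub_vecMulVec hu_one, ht]; norm_num
  obtain ⟨v, hv⟩ := exists_eq_vecMulVec_self_of_trace_eq_one
    (hQ_selfAdj.isSymm_of_mulVec_e₀_eq_zero hQe)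
    (isIdempotentElem_sub_vecMulVec hPP hPu huP hu_one) hQ_trace
  have hQv : Q = vecMulVec v (ηm *ᵥ v) := by
    rw [← mul_ηm_of_mulVec_e₀_eq_zero hQe, hv, vecMulVec_mul, ← mulVec_transpose, ηm_transpose]
  have hvv : ηb v v = 1 := by rw [← hQ_trace, hQv, trace_vecMulVec_ηm]
  have huv : ηb u v = 0 := by
    have hQu : Q *ᵥ u = 0 := sub_vecMulVec_mulVec_self hPu hu_one
    have hv_ne : v ≠ 0 := by rintro rfl; simp [ηb] at hvv
    rw [hQv, vecMulVec_mulVec, dotProduct_ηm_mulVec, op_smul_eq_smul, smul_eq_zero] at hQu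
    rw [ηb_comm]
    exact hQu.resolve_right hv_ne
  exact ⟨u, v, huu, hvv, huv, by rw [← hQv, hQ_eq, add_sub_cancel_right]⟩

lemma SelfAdj.exists_orthonormal_of_mul_self_eq_one {S : Mat4} (hS : SelfAdj S) (hSS : S * S = 1)
    (ht : S.trace = 0) (he : -1 < ηb (S *ᵥ e₀) e₀) :
    ∃ u v : V4, ηb u u = -1 ∧ ηb v v = 1 ∧ ηb u v = 0 ∧
      S = 1 - (2 : ℝ) • (vecMulVec v (ηm *ᵥ v) - vecMulVec u (ηm *ᵥ u)) := by
  obtain ⟨u, v, huu, hvv, huv, hP⟩ :=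
    ((selfAdj_one.sub hS).smul (1 / 2)).exists_orthonormal_of_trace_eq_two
      (isIdempotentElem_half_smul_one_sub hSS)
      (by rw [trace_smul, trace_sub, ht, trace_one, Fintype.card_fin]; norm_num)
      (by
        rw [smul_mulVec, sub_mulVec, one_mulVec, ηb_smul_left, sub_eq_add_neg, ηb_add_left,
          ← neg_one_smul ℝ (S *ᵥ e₀), ηb_smul_left, ηb_e₀_e₀]
        linarith)
  refine ⟨u, v, huu, hvv, huv, ?_⟩
  rw [← hP]
  module

lemma SelfAdj.exists_mul_self_eq_sq_smul_one {T : Mat4} (hT : SelfAdj T)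
    (hsq : (4 : ℝ) • (T * T) = (T * T).trace • (1 : Mat4)) (hne : (T * T).trace ≠ 0)
    (hen : ∀ x, Timelike x → 0 < ηb (T *ᵥ x) x) :
    ∃ l : ℝ, 0 < l ∧ T * T = l ^ 2 • (1 : Mat4) := by
  have hTT : T * T = ((T * T).trace / 4) • (1 : Mat4) := by
    rw [div_eq_inv_mul, mul_smul, ← hsq, inv_smul_smul₀ four_ne_zero]
  have hpos : 0 < (T * T).trace / 4 :=
    (hT.nonneg_of_mul_self_eq_smul_one hTT hen).lt_of_ne' (div_ne_zero hne four_ne_zero)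
  exact ⟨√((T * T).trace / 4), Real.sqrt_pos.mpr hpos, by rwa [Real.sq_sqrt hpos.le]⟩

end Minkowski

section HodgeDual

lemma hat_add (F G : Mat4) : hat (F + G) = hat F + hat G := by
  rw [hat, transpose_add, mul_add, ← hat, ← hat]

lemma hat_smul (c : ℝ) (F : Mat4) : hat (c • F) = c • hat F := by
  rw [hat, transpose_smul, Matrix.mul_smul, ← hat]

lemma hodge_add (F G : Mat4) : hodge (F + G) = hodge F + hodge G := by
  ext i j
  simp only [hodge, of_apply, Matrix.add_apply, mul_add, Finset.sum_add_distrib]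

lemma hodge_smul (c : ℝ) (F : Mat4) : hodge (c • F) = c • hodge F := by
  ext i j
  simp only [hodge, of_apply, Matrix.smul_apply, smul_eq_mul, mul_left_comm _ c, ← Finset.mul_sum]

/-- The 2-form with electric components `E` and magnetic components `B`, in the convention
`E i = F 0 (i + 1)` and `B 0 = F 2 3`, `B 1 = F 3 1`, `B 2 = F 1 2`. Hodge duality then acts by
`(E, B) ↦ (B, -E)`. -/
def faraday (E B : Fin 3 → ℝ) : Mat4 :=
  !![0, E 0, E 1, E 2; -E 0, 0, B 2, -B 1; -E 1, -B 2, 0, B 0; -E 2, B 1, -B 0, 0]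

lemma IsTwoForm.exists_eq_faraday {F : Mat4} (hF : IsTwoForm F) : ∃ E B, F = faraday E B := by
  have skew (i j) : F i j = -F j i := congr_fun₂ hF j i
  have diag (i) : F i i = 0 := by linarith [skew i i]
  refine ⟨![F 0 1, F 0 2, F 0 3], ![F 2 3, F 3 1, F 1 2], ?_⟩
  ext i j
  fin_cases i <;> fin_cases j <;> simp [faraday, diag, skew 1 0, skew 2 0, skew 3 0, skew 2 1,
    skew 3 2, skew 1 3]

lemma hodge_faraday (E B : Fin 3 → ℝ) : hodge (faraday E B) = faraday B (-E) := by
  ext i j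
  simp only [hodge, ηm, diagonal_apply, of_apply, mul_ite, ite_mul, mul_zero,
    zero_mul, Finset.sum_ite_eq, Finset.mem_univ, if_true]
  fin_cases i <;> fin_cases j <;> simp [Fin.sum_univ_four, lc, faraday] <;> ring

lemma hat_faraday (E B : Fin 3 → ℝ) : hat (faraday E B) =
    !![0, E 0, E 1, E 2; E 0, 0, -B 2, B 1; E 1, B 2, 0, -B 0; E 2, -B 1, B 0, 0] := by
  ext i j
  simp only [hat, ηm, diagonal_mul]
  fin_cases i <;> fin_cases j <;> simp [faraday]

lemma IsTwoForm.hodge_hodge {F : Mat4} (hF : IsTwoForm F) : hodge (hodge F) = -F := by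
  obtain ⟨E, B, rfl⟩ := hF.exists_eq_faraday
  rw [hodge_faraday, hodge_faraday]
  ext i j
  fin_cases i <;> fin_cases j <;> simp [faraday]

lemma IsTwoForm.hat_hodge_mul_self {F : Mat4} (hF : IsTwoForm F) :
    hat (hodge F) * hat (hodge F) =
      hat F * hat F - (1 / 2 * (hat F * hat F).trace) • (1 : Mat4) := by
  obtain ⟨E, B, rfl⟩ := hF.exists_eq_faraday
  rw [hodge_faraday, hat_faraday, hat_faraday]
  ext i j
  fin_cases i <;> fin_cases j <;>
    simp [mul_apply, trace, Fin.sum_univ_four] <;> ring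

lemma IsTwoForm.trace_hat_mul_hat_hodge {F : Mat4} (hF : IsTwoForm F) :
    (hat F * hat (hodge F)).trace = 4 * (F 0 1 * F 2 3 - F 0 2 * F 1 3 + F 0 3 * F 1 2) := by
  obtain ⟨E, B, rfl⟩ := hF.exists_eq_faraday
  rw [hodge_faraday, hat_faraday, hat_faraday]
  simp [trace, Fin.sum_univ_four, faraday]
  ring

end HodgeDual

section EnergyTensor

/-- The energy tensor `-½ (F̂ ∘ F̂ + (*F)̂ ∘ (*F)̂)` of a 2-form `F`, as an endomorphism. -/
noncomputable def energyTensor (F : Mat4) : Mat4 :=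
  (-(1 / 2) : ℝ) • (hat F * hat F + hat (hodge F) * hat (hodge F))

lemma IsTwoForm.energyTensor_eq {F : Mat4} (hF : IsTwoForm F) :
    energyTensor F = (1 / 4 * (hat F * hat F).trace) • (1 : Mat4) - hat F * hat F := by
  rw [energyTensor, hF.hat_hodge_mul_self]
  module

lemma IsTwoForm.energyTensor_rotation {F : Mat4} (hF : IsTwoForm F) (θ : ℝ) :
    energyTensor (cos θ • F + sin θ • hodge F) = energyTensor F := by
  have hhodge : hodge (cos θ • F + sin θ • hodge F) = cos θ • hodge F + (-sin θ) • F := by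
    rw [hodge_add, hodge_smul, hodge_smul, hF.hodge_hodge, smul_neg, neg_smul]
  rw [energyTensor, energyTensor, hhodge]
  simp only [hat_add, hat_smul, add_mul, mul_add, smul_mul_smul_comm]
  linear_combination (norm := module)
    (-(1 / 2) * sin_sq_add_cos_sq θ) • (hat F * hat F + hat (hodge F) * hat (hodge F))

end EnergyTensor

section Blade

/-- The simple 2-form `u♭ ∧ v♭` spanned by two vectors, where `u♭ = η(u, ·)`. -/
noncomputable def wedge (u v : V4) : Mat4 :=
  vecMulVec (ηm *ᵥ u) (ηm *ᵥ v) - vecMulVec (ηm *ᵥ v) (ηm *ᵥ u)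

lemma isTwoForm_wedge (u v : V4) : IsTwoForm (wedge u v) := by
  rw [IsTwoForm, wedge, transpose_sub, transpose_vecMulVec, transpose_vecMulVec, neg_sub]

lemma trace_hat_wedge_mul_hat_hodge_wedge (u v : V4) :
    (hat (wedge u v) * hat (hodge (wedge u v))).trace = 0 := by
  rw [(isTwoForm_wedge u v).trace_hat_mul_hat_hodge]
  simp only [wedge, Matrix.sub_apply, vecMulVec_apply]
  ring

lemma hat_wedge (u v : V4) :
    hat (wedge u v) = vecMulVec v (ηm *ᵥ u) - vecMulVec u (ηm *ᵥ v) := by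
  simp only [hat, wedge, transpose_sub, transpose_vecMulVec, mul_sub, mul_vecMulVec, mulVec_mulVec,
    ηm_mul_ηm, one_mulVec]

lemma hat_wedge_mul_self (u v : V4) :
    hat (wedge u v) * hat (wedge u v) =
      ηb u v • (vecMulVec u (ηm *ᵥ v) + vecMulVec v (ηm *ᵥ u))
        - ηb u u • vecMulVec v (ηm *ᵥ v) - ηb v v • vecMulVec u (ηm *ᵥ u) := by
  simp only [hat_wedge, sub_mul, mul_sub, vecMulVec_mul_vecMulVec, dotProduct_ηm_mulVec,
    vecMulVec_smul, ηb_comm v u]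
  module

lemma energyTensor_wedge (u v : V4) :
    energyTensor (wedge u v) =
      (1 / 2 * (ηb u v ^ 2 - ηb u u * ηb v v)) • (1 : Mat4) -
        (ηb u v • (vecMulVec u (ηm *ᵥ v) + vecMulVec v (ηm *ᵥ u))
          - ηb u u • vecMulVec v (ηm *ᵥ v) - ηb v v • vecMulVec u (ηm *ᵥ u)) := by
  have htr : (hat (wedge u v) * hat (wedge u v)).trace =
      2 * (ηb u v ^ 2 - ηb u u * ηb v v) := by
    simp only [hat_wedge_mul_self, trace_sub, trace_smul, trace_add, trace_vecMulVec_ηm,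
      ηb_comm v u, smul_eq_mul]
    ring
  rw [(isTwoForm_wedge u v).energyTensor_eq, htr, hat_wedge_mul_self]
  module

lemma energyTensor_wedge_of_orthonormal {u v : V4} (huu : ηb u u = -1) (hvv : ηb v v = 1)
    (huv : ηb u v = 0) {l : ℝ} (hl : 0 ≤ l) :
    energyTensor (wedge (√(2 * l) • u) v) =
      l • (1 - (2 : ℝ) • (vecMulVec v (ηm *ᵥ v) - vecMulVec u (ηm *ᵥ u))) := by
  have hsqrt : √(2 * l) * √(2 * l) = 2 * l := Real.mul_self_sqrt (by positivity)
  simp only [energyTensor_wedge, ηb_smul_left, ηb_smul_right, mulVec_smul, smul_vecMulVec,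
    vecMulVec_smul, huu, hvv, huv, smul_smul, ← mul_assoc, hsqrt]
  module

end Blade

/-- Algebraic Rainich theorem (2-form version): a tensor `T` satisfying the
Rainich algebraic conditions is the energy tensor of a simple 2-form `F`, and
every duality rotation of `F` has the same energy tensor. -/
theorem stmt8 (T : Mat4) (hsa : SelfAdj T) (h0 : T.trace = 0)
    (hsq : (4 : ℝ) • (T * T) = (T * T).trace • (1 : Mat4))
    (hne : (T * T).trace ≠ 0)
    (hen : ∀ x : V4, Timelike x → 0 < ηb (T *ᵥ x) x) :
    ∃ F : Mat4, IsTwoForm F ∧ (hat F * hat (hodge F)).trace = 0 ∧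
      T = (-(1/2) : ℝ) • (hat F * hat F + hat (hodge F) * hat (hodge F)) ∧
      ∀ θ : ℝ,
        (-(1/2) : ℝ) •
          (hat (Real.cos θ • F + Real.sin θ • hodge F) *
            hat (Real.cos θ • F + Real.sin θ • hodge F) +
          hat (hodge (Real.cos θ • F + Real.sin θ • hodge F)) *
            hat (hodge (Real.cos θ • F + Real.sin θ • hodge F))) = T := by
  obtain ⟨l, hl, hTT⟩ := hsa.exists_mul_self_eq_sq_smul_one hsq hne hen
  have hSS : (l⁻¹ • T) * (l⁻¹ • T) = 1 := by
    rw [smul_mul_smul_comm, hTT, smul_smul, ← sq, ← mul_pow, inv_mul_cancel₀ hl.ne', one_pow,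
      one_smul]
  have he : 0 < ηb ((l⁻¹ • T) *ᵥ e₀) e₀ := by
    rw [smul_mulVec, ηb_smul_left]
    exact mul_pos (inv_pos.mpr hl) (hen e₀ timelike_e₀)
  obtain ⟨u, v, huu, hvv, huv, hS⟩ := (hsa.smul l⁻¹).exists_orthonormal_of_mul_self_eq_one hSS
    (by rw [trace_smul, h0, smul_zero]) (neg_one_lt_zero.trans he)
  have hT : energyTensor (wedge (√(2 * l) • u) v) = T := by
    rw [energyTensor_wedge_of_orthonormal huu hvv huv hl.le, ← hS, smul_inv_smul₀ hl.ne']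
  have hF := isTwoForm_wedge (√(2 * l) • u) v
  exact ⟨_, hF, trace_hat_wedge_mul_hat_hodge_wedge _ _, hT.symm,
    fun θ => (hF.energyTensor_rotation θ).trans hT⟩
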